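/- If the sources vanish (F^m = 0 for all m >= 1), then any solution of the splitting scheme with all members in H_h conserves mass: ||Psi^m||_{H_h} = ||Psi^0_h||_{H_h} for every m >= 1. -/

import Mathlib

/-!
Each of the three substeps preserves the norm.

The potential steps act node by node as multiplication by `-z / conj z`, so they preserve
moduli (`pointwise_norm`).

For the kinetic step put `u = Ψ̃ - Ψ̆` and `w = (Ψ̃ + Ψ̆) / 2`; then `Re ⟪w, u⟫ = 0` is equality of the
two norms. Mesh functions are viewed in `ℓ²(ℕ × ℕ)`, where the Dirichlet second differences are
`R + R* - 2` for a partial shift `R`. They are self-adjoint, they commute with each other, and their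
norm is at most `4`. Hence `s_N` is a self-adjoint operator with `‖1 - s_N‖ ≤ 2/3`, so it is
invertible (`opS_isUnit`), and it commutes with the self-adjoint operator `Δ_{hN}`. Writing
`w = s_N z` and pairing the equation with `z` gives
`i (ħ/τ) ⟪w, u⟫ = -c_h ⟪z, Δ_{hN} s_N z⟫ + ⟪w, Ṽ w⟫`, whose right side is real
(`energy_identity`). That `Ṽ` need not commute with `s_N` is harmless, since `s_N` is moved onto `z`.
-/

noncomputable section

/-- Second difference quotient in `x`, with output set to `0` at the boundary
indices `j = 0`, `k = 0`, `k = K` (and, harmlessly, off the mesh `k > K`). -/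
def ddx (K : ℕ) (hx : ℝ) (W : ℕ → ℕ → ℂ) : ℕ → ℕ → ℂ := fun j k =>
  if j = 0 ∨ k = 0 ∨ K ≤ k then 0
  else (W (j + 1) k - 2 * W j k + W (j - 1) k) / (hx : ℂ) ^ 2

/-- Second difference quotient in `y`, with output set to `0` at the boundary. -/
def ddy (K : ℕ) (hy : ℝ) (W : ℕ → ℕ → ℂ) : ℕ → ℕ → ℂ := fun j k =>
  if j = 0 ∨ k = 0 ∨ K ≤ k then 0
  else (W j (k + 1) - 2 * W j k + W j (k - 1)) / (hy : ℂ) ^ 2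

/-- Numerov average in `x`: `s_{Nx} = I + (h_x^2/12) ∂_x ∂̄_x`. -/
def sNx (K : ℕ) (hx : ℝ) (W : ℕ → ℕ → ℂ) : ℕ → ℕ → ℂ := fun j k =>
  W j k + ((hx ^ 2 / 12 : ℝ) : ℂ) * ddx K hx W j k

/-- Numerov average in `y`: `s_{Ny} = I + (h_y^2/12) ∂_y ∂̄_y`. -/
def sNy (K : ℕ) (hy : ℝ) (W : ℕ → ℕ → ℂ) : ℕ → ℕ → ℂ := fun j k =>
  W j k + ((hy ^ 2 / 12 : ℝ) : ℂ) * ddy K hy W j k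

/-- The full Numerov average `s_N = I + (h_x^2/12) ∂_x ∂̄_x + (h_y^2/12) ∂_y ∂̄_y`. -/
def sN (K : ℕ) (hx hy : ℝ) (W : ℕ → ℕ → ℂ) : ℕ → ℕ → ℂ := fun j k =>
  W j k + ((hx ^ 2 / 12 : ℝ) : ℂ) * ddx K hx W j k + ((hy ^ 2 / 12 : ℝ) : ℂ) * ddy K hy W j k

/-- The Numerov discretization `Δ_{hN} = s_{Ny} ∂_x ∂̄_x + s_{Nx} ∂_y ∂̄_y` of the Laplacian. -/
def deltaHN (K : ℕ) (hx hy : ℝ) (W : ℕ → ℕ → ℂ) : ℕ → ℕ → ℂ := fun j k =>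
  sNy K hy (ddx K hx W) j k + sNx K hx (ddy K hy W) j k

/-- Membership in the Hilbert space `H_h` of mesh functions on the semi-infinite strip:
vanishing at `j = 0`, `k = 0`, `k = K`, and square-summable. -/
def memH (K : ℕ) (W : ℕ → ℕ → ℂ) : Prop :=
  (∀ k, W 0 k = 0) ∧ (∀ j, W j 0 = 0) ∧ (∀ j, W j K = 0) ∧
    Summable fun j : ℕ => ∑ k ∈ Finset.Icc 1 (K - 1), ‖W j k‖ ^ 2

/-- The inner product `(U,W)_{H_h} = ∑_{j ≥ 1} ∑_{k=1}^{K-1} U_{j,k} conj(W_{j,k}) h_x h_y`. -/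
def innH (K : ℕ) (hx hy : ℝ) (U W : ℕ → ℕ → ℂ) : ℂ :=
  ∑' j : ℕ, ∑ k ∈ Finset.Icc 1 (K - 1),
    U (j + 1) k * (starRingEnd ℂ) (W (j + 1) k) * ((hx * hy : ℝ) : ℂ)

/-- The norm `‖W‖_{H_h}`. -/
def nrmH (K : ℕ) (hx hy : ℝ) (W : ℕ → ℕ → ℂ) : ℝ :=
  Real.sqrt (innH K hx hy W W).re

/-- The three-step Strang splitting scheme on the infinite space mesh: the families
`PsiB = Ψ̆`, `PsiT = Ψ̃` (for `m ≥ 1`) and `Psi = Ψ` (for `m ≥ 0`), all in `H_h`,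
satisfy equations (i)-(iii) at every interior node `(j ≥ 1, 1 ≤ k ≤ K-1)`. -/
def SplitSol (K : ℕ) (hx hy hbar ch : ℝ) (V : ℕ → ℕ → ℝ) (Vt : ℕ → ℝ)
    (tau : ℕ → ℝ) (F : ℕ → ℕ → ℕ → ℂ)
    (PsiB PsiT Psi : ℕ → ℕ → ℕ → ℂ) : Prop :=
  (∀ m, 1 ≤ m → memH K (PsiB m)) ∧
  (∀ m, 1 ≤ m → memH K (PsiT m)) ∧
  (∀ m, memH K (Psi m)) ∧
  -- (i)
  (∀ m, 1 ≤ m → ∀ j k, 1 ≤ j → 1 ≤ k → k ≤ K - 1 →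
    Complex.I * (hbar : ℂ) * (PsiB m j k - Psi (m - 1) j k) / ((tau m / 2 : ℝ) : ℂ)
      = ((V j k - Vt j : ℝ) : ℂ) * ((PsiB m j k + Psi (m - 1) j k) / 2)) ∧
  -- (ii)
  (∀ m, 1 ≤ m → ∀ j k, 1 ≤ j → 1 ≤ k → k ≤ K - 1 →
    Complex.I * (hbar : ℂ)
        * sN K hx hy (fun j' k' => PsiT m j' k' - PsiB m j' k') j k / ((tau m : ℝ) : ℂ)
      = -(ch : ℂ) * deltaHN K hx hy (fun j' k' => (PsiT m j' k' + PsiB m j' k') / 2) j k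
        + sN K hx hy (fun j' k' => (Vt j' : ℂ) * ((PsiT m j' k' + PsiB m j' k') / 2)) j k
        + F m j k) ∧
  -- (iii)
  (∀ m, 1 ≤ m → ∀ j k, 1 ≤ j → 1 ≤ k → k ≤ K - 1 →
    Complex.I * (hbar : ℂ) * (Psi m j k - PsiT m j k) / ((tau m / 2 : ℝ) : ℂ)
      = ((V j k - Vt j : ℝ) : ℂ) * ((Psi m j k + PsiT m j k) / 2))

/-! ### Partial shifts on the Hilbert space of square-summable families -/

/-- Square-summable complex families indexed by the whole quarter-plane `ℕ × ℕ`; the space `H_h`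
sits inside as the families vanishing off the mesh interior. -/
abbrev EllTwo := lp (fun _ : ℕ × ℕ => ℂ) 2

open Classical in
lemma pshift_sum_le (e : PartialEquiv (ℕ × ℕ) (ℕ × ℕ)) (w : EllTwo) (s : Finset (ℕ × ℕ)) :
    ∑ i ∈ s, ‖(if i ∈ e.source then w (e i) else 0 : ℂ)‖ ^ (2 : ENNReal).toReal
      ≤ ‖w‖ ^ (2 : ENNReal).toReal := by
  have h1 : ∑ i ∈ s, ‖(if i ∈ e.source then w (e i) else 0 : ℂ)‖ ^ (2 : ENNReal).toReal
      = ∑ i ∈ s.filter (· ∈ e.source), ‖w (e i)‖ ^ (2 : ENNReal).toReal := by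
    rw [Finset.sum_filter]
    refine Finset.sum_congr rfl fun i _ => ?_
    split_ifs <;> simp
  have h2 : Set.InjOn e (s.filter (· ∈ e.source) : Finset (ℕ × ℕ)) := by
    intro x hx y hy h
    simp only [Finset.coe_filter, Set.mem_ofPred_eq] at hx hy
    exact e.injOn hx.2 hy.2 h
  rw [h1, ← Finset.sum_image (f := fun p => ‖w p‖ ^ (2 : ENNReal).toReal) h2]
  exact lp.sum_rpow_le_norm_rpow (by norm_num) w _

open Classical in
/-- The partial isometry of `ℓ²` induced by a partial bijection `e` of the index set:
`(pshift e w) i = w (e i)` for `i` in the source of `e`, and `0` elsewhere. -/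
def pshift (e : PartialEquiv (ℕ × ℕ) (ℕ × ℕ)) : EllTwo →L[ℂ] EllTwo :=
  LinearMap.mkContinuous
    { toFun := fun w => ⟨fun i => if i ∈ e.source then w (e i) else 0,
        memℓp_gen' (pshift_sum_le e w)⟩
      map_add' := by
        intro x y
        ext i
        change (if i ∈ e.source then x (e i) + y (e i) else 0 : ℂ)
          = (if i ∈ e.source then x (e i) else 0) + (if i ∈ e.source then y (e i) else 0)
        split_ifs <;> simp
      map_smul' := by
        intro c x
        ext i
        change (if i ∈ e.source then c * x (e i) else 0 : ℂ)
          = c * (if i ∈ e.source then x (e i) else 0)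
        split_ifs <;> simp } 1 (by
    intro w
    rw [one_mul]
    exact lp.norm_le_of_forall_sum_le (by norm_num) (norm_nonneg _) (pshift_sum_le e w))

open Classical in
lemma pshift_apply (e : PartialEquiv (ℕ × ℕ) (ℕ × ℕ)) (w : EllTwo) (i : ℕ × ℕ) :
    pshift e w i = if i ∈ e.source then w (e i) else 0 := rfl

lemma pshift_norm_le (e : PartialEquiv (ℕ × ℕ) (ℕ × ℕ)) : ‖pshift e‖ ≤ 1 :=
  LinearMap.mkContinuous_norm_le _ zero_le_one _

/-- The inverse partial bijection induces the adjoint operator: reindex the inner product along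
the bijection between source and target. -/
lemma pshift_inner (e : PartialEquiv (ℕ × ℕ) (ℕ × ℕ)) (u w : EllTwo) :
    inner ℂ (pshift e u) w = inner ℂ u (pshift e.symm w) := by
  classical
  rw [lp.inner_eq_tsum, lp.inner_eq_tsum]
  have h1 : (fun i => inner ℂ (pshift e u i) (w i))
      = e.source.indicator (fun i => inner ℂ (u (e i)) (w i)) := by
    funext i
    by_cases h : i ∈ e.source <;> simp [pshift_apply, h]
  have h2 : (fun i => inner ℂ (u i) (pshift e.symm w i))
      = e.target.indicator (fun i => inner ℂ (u i) (w (e.symm i))) := by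
    funext i
    by_cases h : i ∈ e.target <;> simp [pshift_apply, h]
  rw [h1, h2, ← tsum_subtype, ← tsum_subtype, ← Equiv.tsum_eq e.toEquiv]
  refine tsum_congr fun i => ?_
  have h3 : ((e.toEquiv i : e.target) : ℕ × ℕ) = e i := rfl
  rw [h3, e.left_inv i.2]

/-- The undivided Dirichlet second difference along the partial bijection `e`. -/
def secDiff (e : PartialEquiv (ℕ × ℕ) (ℕ × ℕ)) : EllTwo →L[ℂ] EllTwo :=
  pshift e + pshift e.symm - (2 : ℂ) • (1 : EllTwo →L[ℂ] EllTwo)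

lemma secDiff_selfAdjoint (e : PartialEquiv (ℕ × ℕ) (ℕ × ℕ)) : IsSelfAdjoint (secDiff e) := by
  rw [ContinuousLinearMap.isSelfAdjoint_iff_isSymmetric]
  intro u w
  have h := pshift_inner e.symm u w
  have h2 : (starRingEnd ℂ) 2 = 2 := Complex.conj_ofNat 2
  rw [PartialEquiv.symm_symm] at h
  simp [secDiff, inner_add_left, inner_add_right, inner_sub_left, inner_sub_right,
    inner_smul_left, inner_smul_right, pshift_inner e, h, h2]
  ring

lemma secDiff_norm_le (e : PartialEquiv (ℕ × ℕ) (ℕ × ℕ)) : ‖secDiff e‖ ≤ 4 := by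
  have h1 := pshift_norm_le e
  have h2 := pshift_norm_le e.symm
  have h3 : ‖(2 : ℂ) • (1 : EllTwo →L[ℂ] EllTwo)‖ ≤ 2 := by
    rw [norm_smul]
    have : ‖(1 : EllTwo →L[ℂ] EllTwo)‖ ≤ 1 := ContinuousLinearMap.norm_id_le
    norm_num
    linarith
  calc ‖secDiff e‖ ≤ ‖pshift e + pshift e.symm‖ + ‖(2 : ℂ) • (1 : EllTwo →L[ℂ] EllTwo)‖ :=
        norm_sub_le _ _
    _ ≤ ‖pshift e‖ + ‖pshift e.symm‖ + ‖(2 : ℂ) • (1 : EllTwo →L[ℂ] EllTwo)‖ := by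
        gcongr
        exact norm_add_le _ _
    _ ≤ 4 := by linarith

/-! ### The shifts of the mesh interior -/

/-- The step `(j, k) ↦ (j + 1, k)` between interior nodes. -/
def stepX (K : ℕ) : PartialEquiv (ℕ × ℕ) (ℕ × ℕ) where
  toFun p := (p.1 + 1, p.2)
  invFun p := (p.1 - 1, p.2)
  source := {p | 1 ≤ p.1 ∧ 1 ≤ p.2 ∧ p.2 < K}
  target := {p | 2 ≤ p.1 ∧ 1 ≤ p.2 ∧ p.2 < K}
  map_source' := by
    rintro ⟨j, k⟩ h
    simp only [Set.mem_ofPred_eq] at h ⊢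
    omega
  map_target' := by
    rintro ⟨j, k⟩ h
    simp only [Set.mem_ofPred_eq] at h ⊢
    omega
  left_inv' := by
    rintro ⟨j, k⟩ h
    simp
  right_inv' := by
    rintro ⟨j, k⟩ h
    simp only [Set.mem_ofPred_eq] at h
    ext <;> simp only <;> omega

/-- The step `(j, k) ↦ (j, k + 1)` between interior nodes. -/
def stepY (K : ℕ) : PartialEquiv (ℕ × ℕ) (ℕ × ℕ) where
  toFun p := (p.1, p.2 + 1)
  invFun p := (p.1, p.2 - 1)
  source := {p | 1 ≤ p.1 ∧ 1 ≤ p.2 ∧ p.2 + 1 < K}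
  target := {p | 1 ≤ p.1 ∧ 2 ≤ p.2 ∧ p.2 < K}
  map_source' := by
    rintro ⟨j, k⟩ h
    simp only [Set.mem_ofPred_eq] at h ⊢
    omega
  map_target' := by
    rintro ⟨j, k⟩ h
    simp only [Set.mem_ofPred_eq] at h ⊢
    omega
  left_inv' := by
    rintro ⟨j, k⟩ h
    simp
  right_inv' := by
    rintro ⟨j, k⟩ h
    simp only [Set.mem_ofPred_eq] at h
    ext <;> simp only <;> omega

lemma stepX_apply (K : ℕ) (w : EllTwo) (j k : ℕ) : pshift (stepX K) w (j, k)
    = if 1 ≤ j ∧ 1 ≤ k ∧ k < K then w (j + 1, k) else 0 := by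
  classical
  rw [pshift_apply]
  exact if_congr Iff.rfl rfl rfl

lemma stepX_symm_apply (K : ℕ) (w : EllTwo) (j k : ℕ) : pshift (stepX K).symm w (j, k)
    = if 2 ≤ j ∧ 1 ≤ k ∧ k < K then w (j - 1, k) else 0 := by
  classical
  rw [pshift_apply]
  exact if_congr Iff.rfl rfl rfl

lemma stepY_apply (K : ℕ) (w : EllTwo) (j k : ℕ) : pshift (stepY K) w (j, k)
    = if 1 ≤ j ∧ 1 ≤ k ∧ k + 1 < K then w (j, k + 1) else 0 := by
  classical
  rw [pshift_apply]
  exact if_congr Iff.rfl rfl rfl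

lemma stepY_symm_apply (K : ℕ) (w : EllTwo) (j k : ℕ) : pshift (stepY K).symm w (j, k)
    = if 1 ≤ j ∧ 2 ≤ k ∧ k < K then w (j, k - 1) else 0 := by
  classical
  rw [pshift_apply]
  exact if_congr Iff.rfl rfl rfl

lemma commute_XY (K : ℕ) : Commute (pshift (stepX K)) (pshift (stepY K)) := by
  ext w ⟨j, k⟩
  simp only [mul_apply_eq_comp, stepX_apply, stepY_apply]
  split_ifs <;> first | rfl | omega

lemma commute_XY' (K : ℕ) : Commute (pshift (stepX K)) (pshift (stepY K).symm) := by
  ext w ⟨j, k⟩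
  simp only [mul_apply_eq_comp, stepX_apply, stepY_symm_apply]
  split_ifs <;> first | rfl | omega

lemma commute_X'Y (K : ℕ) : Commute (pshift (stepX K).symm) (pshift (stepY K)) := by
  ext w ⟨j, k⟩
  simp only [mul_apply_eq_comp, stepX_symm_apply, stepY_apply]
  split_ifs <;> first | rfl | omega

lemma commute_X'Y' (K : ℕ) : Commute (pshift (stepX K).symm) (pshift (stepY K).symm) := by
  ext w ⟨j, k⟩
  simp only [mul_apply_eq_comp, stepX_symm_apply, stepY_symm_apply]
  split_ifs <;> first | rfl | omega

lemma secDiff_commute (K : ℕ) : Commute (secDiff (stepX K)) (secDiff (stepY K)) := by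
  have hl : ∀ T : EllTwo →L[ℂ] EllTwo, Commute ((2 : ℂ) • (1 : EllTwo →L[ℂ] EllTwo)) T :=
    fun T => (Commute.one_left T).smul_left 2
  have hr : ∀ T : EllTwo →L[ℂ] EllTwo, Commute T ((2 : ℂ) • (1 : EllTwo →L[ℂ] EllTwo)) :=
    fun T => (hl T).symm
  have h1 := ((commute_XY K).add_left (commute_X'Y K))
  have h2 := ((commute_XY' K).add_left (commute_X'Y' K))
  exact (((h1.sub_left (hl _)).add_right (h2.sub_left (hl _))).sub_right (hr _))

/-! ### The Numerov operators and the energy identity -/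

/-- The Numerov average `s_N` as a bounded operator. The mesh steps cancel:
`(h ^ 2 / 12) * h ^ (-2) = 1 / 12`. -/
def opS (K : ℕ) : EllTwo →L[ℂ] EllTwo :=
  1 + ((1 / 12 : ℝ) : ℂ) • secDiff (stepX K) + ((1 / 12 : ℝ) : ℂ) • secDiff (stepY K)

/-- The Numerov Laplacian `Δ_{hN}` as a bounded operator. -/
def opD (K : ℕ) (hx hy : ℝ) : EllTwo →L[ℂ] EllTwo :=
  (1 + ((1 / 12 : ℝ) : ℂ) • secDiff (stepY K)) * ((((hx ^ 2)⁻¹ : ℝ) : ℂ) • secDiff (stepX K)) +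
  (1 + ((1 / 12 : ℝ) : ℂ) • secDiff (stepX K)) * ((((hy ^ 2)⁻¹ : ℝ) : ℂ) • secDiff (stepY K))

/-- The Neumann series applies, since `‖1 - s_N‖ ≤ 4 / 12 + 4 / 12 < 1`. -/
lemma opS_isUnit (K : ℕ) : IsUnit (opS K) := by
  have h : opS K = 1 - (-(((1 / 12 : ℝ) : ℂ) • secDiff (stepX K)
      + ((1 / 12 : ℝ) : ℂ) • secDiff (stepY K))) := by
    rw [opS]
    abel
  rw [h]
  apply isUnit_one_sub_of_norm_lt_one
  rw [norm_neg]
  refine (norm_add_le _ _).trans_lt ?_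
  rw [norm_smul, norm_smul, Complex.norm_real, Real.norm_of_nonneg (by norm_num)]
  have h1 := secDiff_norm_le (stepX K)
  have h2 := secDiff_norm_le (stepY K)
  linarith

lemma selfAdjoint_real_smul {T : EllTwo →L[ℂ] EllTwo} (hT : IsSelfAdjoint T) (r : ℝ) :
    IsSelfAdjoint ((r : ℂ) • T) :=
  IsSelfAdjoint.smul (Complex.conj_ofReal r) hT

lemma opS_selfAdjoint (K : ℕ) : IsSelfAdjoint (opS K) :=
  ((IsSelfAdjoint.one _).add (selfAdjoint_real_smul (secDiff_selfAdjoint _) _)).add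
    (selfAdjoint_real_smul (secDiff_selfAdjoint _) _)

lemma commute_one_add_smul {P Q : EllTwo →L[ℂ] EllTwo} (h : Commute P Q) (a b : ℂ) :
    Commute (1 + a • P) (b • Q) :=
  ((Commute.one_left _).add_left (h.smul_left a)).smul_right b

lemma opD_selfAdjoint (K : ℕ) (hx hy : ℝ) : IsSelfAdjoint (opD K hx hy) := by
  have hX := secDiff_selfAdjoint (stepX K)
  have hY := secDiff_selfAdjoint (stepY K)
  have hc := secDiff_commute K
  have h1 := (IsSelfAdjoint.commute_iff ((IsSelfAdjoint.one _).add
    (selfAdjoint_real_smul hY (1 / 12))) (selfAdjoint_real_smul hX (hx ^ 2)⁻¹)).1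
    (commute_one_add_smul hc.symm _ _)
  have h2 := (IsSelfAdjoint.commute_iff ((IsSelfAdjoint.one _).add
    (selfAdjoint_real_smul hX (1 / 12))) (selfAdjoint_real_smul hY (hy ^ 2)⁻¹)).1
    (commute_one_add_smul hc _ _)
  exact h1.add h2

lemma opS_opD_commute (K : ℕ) (hx hy : ℝ) : Commute (opS K) (opD K hx hy) := by
  have hc := secDiff_commute K
  have key : ∀ T : EllTwo →L[ℂ] EllTwo, Commute (secDiff (stepX K)) T →
      Commute (secDiff (stepY K)) T → Commute (opS K) T := fun T h1 h2 =>
    ((Commute.one_left T).add_left (h1.smul_left _)).add_left (h2.smul_left _)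
  have hX := key _ (Commute.refl _) hc.symm
  have hY := key _ hc (Commute.refl _)
  exact ((((Commute.one_right _).add_right (hY.smul_right _)).mul_right (hX.smul_right _))).add_right
    ((((Commute.one_right _).add_right (hX.smul_right _)).mul_right (hY.smul_right _)))

/-- The inner product of `w` and `u` is purely imaginary: with `w = S z`, pair the equation
`i α S u = -c D w + S v` with `z`. The left side becomes `i α ⟪w, u⟫`, while the right side is real
because `D S` is self-adjoint and `⟪v, w⟫` is real. -/
lemma energy_identity {S D : EllTwo →L[ℂ] EllTwo} (hS : IsSelfAdjoint S) (hD : IsSelfAdjoint D)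
    (hSD : Commute S D) (hU : IsUnit S) {α c : ℝ} (hα : α ≠ 0) {u w v : EllTwo}
    (hv : (inner ℂ w v).im = 0)
    (h : (Complex.I * (α : ℂ)) • S u = -(c : ℂ) • D w + S v) : (inner ℂ w u).re = 0 := by
  obtain ⟨S', rfl⟩ := hU
  obtain ⟨z, rfl⟩ : ∃ z, (S' : EllTwo →L[ℂ] EllTwo) z = w := by
    refine ⟨(↑S'⁻¹ : EllTwo →L[ℂ] EllTwo) w, ?_⟩
    rw [← mul_apply_eq_comp, Units.mul_inv]
    rfl
  have hSs := ContinuousLinearMap.isSelfAdjoint_iff_isSymmetric.1 hS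
  have hDS := ContinuousLinearMap.isSelfAdjoint_iff_isSymmetric.1
    ((IsSelfAdjoint.commute_iff hD hS).1 hSD.symm)
  have him : (inner ℂ z (D ((S' : EllTwo →L[ℂ] EllTwo) z))).im = 0 := by
    have h1 := hDS z z
    rw [← Complex.conj_eq_iff_im, inner_conj_symm]
    exact h1
  have h2 := congrArg (fun y => (inner ℂ z y).im) h
  have e1 : inner ℂ z ((S' : EllTwo →L[ℂ] EllTwo) u)
      = inner ℂ ((S' : EllTwo →L[ℂ] EllTwo) z) u := (hSs z u).symm
  have e2 : inner ℂ z ((S' : EllTwo →L[ℂ] EllTwo) v)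
      = inner ℂ ((S' : EllTwo →L[ℂ] EllTwo) z) v := (hSs z v).symm
  simp only [inner_add_right, inner_smul_right, e1, e2] at h2
  simp [hv, him] at h2
  exact h2.resolve_left hα

/-! ### Mesh functions as square-summable families -/

/-- Cut a mesh function down to the interior nodes of the mesh. -/
def cut (K : ℕ) (W : ℕ → ℕ → ℂ) : ℕ × ℕ → ℂ := fun p =>
  if 1 ≤ p.1 ∧ 1 ≤ p.2 ∧ p.2 < K then W p.1 p.2 else 0

lemma cut_fibre {K : ℕ} {W : ℕ → ℕ → ℂ} (hW : memH K W) (j : ℕ) :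
    HasSum (fun k => ‖cut K W (j, k)‖ ^ 2) (∑ k ∈ Finset.Icc 1 (K - 1), ‖W j k‖ ^ 2) := by
  have h : ∑ k ∈ Finset.Icc 1 (K - 1), ‖W j k‖ ^ 2
      = ∑ k ∈ Finset.Icc 1 (K - 1), ‖cut K W (j, k)‖ ^ 2 := by
    refine Finset.sum_congr rfl fun k hk => ?_
    rw [Finset.mem_Icc] at hk
    rcases Nat.eq_zero_or_pos j with rfl | hj
    · simp [cut, hW.1]
    · rw [cut, if_pos ⟨hj, hk.1, by omega⟩]
  rw [h]
  refine hasSum_sum_of_ne_finset_zero fun k hk => ?_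
  rw [Finset.mem_Icc] at hk
  rw [cut, if_neg (by simp only; omega)]
  simp

lemma cut_summable {K : ℕ} {W : ℕ → ℕ → ℂ} (hW : memH K W) :
    Summable fun p => ‖cut K W p‖ ^ 2 := by
  rw [summable_prod_of_nonneg (fun p => by positivity)]
  refine ⟨fun j => (cut_fibre hW j).summable, ?_⟩
  simp only [fun j => (cut_fibre hW j).tsum_eq]
  exact hW.2.2.2

/-- The element of `ℓ²` attached to a mesh function of `H_h`. -/
def lift {K : ℕ} {W : ℕ → ℕ → ℂ} (hW : memH K W) : EllTwo :=
  ⟨cut K W, memℓp_gen (by simpa using cut_summable hW)⟩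

lemma lift_apply {K : ℕ} {W : ℕ → ℕ → ℂ} (hW : memH K W) (j k : ℕ) :
    lift hW (j, k) = if 1 ≤ j ∧ 1 ≤ k ∧ k < K then W j k else 0 := rfl

lemma innH_self {K : ℕ} {W : ℕ → ℕ → ℂ} (hW : memH K W) (hx hy : ℝ) :
    innH K hx hy W W = ((hx * hy * ‖lift hW‖ ^ 2 : ℝ) : ℂ) := by
  have h1 : ‖lift hW‖ ^ 2 = ∑' p, ‖cut K W p‖ ^ 2 := by
    have := lp.norm_rpow_eq_tsum (p := 2) (by norm_num) (lift hW)
    simp only [ENNReal.toReal_ofNat, Real.rpow_ofNat] at this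
    exact this
  have h2 : ∑' p, ‖cut K W p‖ ^ 2
      = ∑' j : ℕ, ∑ k ∈ Finset.Icc 1 (K - 1), ‖W (j + 1) k‖ ^ 2 := by
    rw [(cut_summable hW).tsum_prod]
    simp only [fun j => (cut_fibre hW j).tsum_eq]
    rw [hW.2.2.2.tsum_eq_zero_add]
    simp [hW.1]
  rw [h1, h2, innH, ← tsum_mul_left, Complex.ofReal_tsum]
  refine tsum_congr fun j => ?_
  rw [Finset.mul_sum, Complex.ofReal_sum]
  refine Finset.sum_congr rfl fun k _ => ?_
  rw [Complex.mul_conj, Complex.normSq_eq_norm_sq]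
  push_cast
  ring

lemma nrmH_congr {K : ℕ} {U W : ℕ → ℕ → ℂ} (hx hy : ℝ)
    (h : ∀ j k, 1 ≤ j → 1 ≤ k → k ≤ K - 1 → ‖U j k‖ = ‖W j k‖) :
    nrmH K hx hy U = nrmH K hx hy W := by
  have : innH K hx hy U U = innH K hx hy W W := by
    refine tsum_congr fun j => Finset.sum_congr rfl fun k hk => ?_
    rw [Finset.mem_Icc] at hk
    rw [Complex.mul_conj, Complex.mul_conj, Complex.normSq_eq_norm_sq,
      Complex.normSq_eq_norm_sq, h (j + 1) k (by omega) hk.1 hk.2]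
  rw [nrmH, nrmH, this]

lemma ddx_congr {K : ℕ} {U W : ℕ → ℕ → ℂ} (hx : ℝ) (h : ∀ j k, k ≤ K → U j k = W j k) :
    ddx K hx U = ddx K hx W := by
  funext j k
  unfold ddx
  split_ifs with h1
  · rfl
  · rw [h _ _ (by omega), h _ _ (by omega), h _ _ (by omega)]

lemma ddy_congr {K : ℕ} {U W : ℕ → ℕ → ℂ} (hy : ℝ) (h : ∀ j k, k ≤ K → U j k = W j k) :
    ddy K hy U = ddy K hy W := by
  funext j k
  unfold ddy
  split_ifs with h1
  · rfl
  · rw [h _ _ (by omega), h _ _ (by omega), h _ _ (by omega)]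

/-- The cut only changes values at the nodes with `K < k`: on the mesh boundary, members of `H_h`
vanish anyway. -/
lemma lift_agree {K : ℕ} {W : ℕ → ℕ → ℂ} (hW : memH K W) (j k : ℕ) (hk : k ≤ K) :
    lift hW (j, k) = W j k := by
  rw [lift_apply]
  split_ifs with h
  · rfl
  · obtain rfl | rfl | rfl : j = 0 ∨ k = 0 ∨ k = K := by omega
    · exact (hW.1 k).symm
    · exact (hW.2.1 j).symm
    · exact (hW.2.2.1 j).symm

/-- Families vanishing off the mesh interior. -/
def Interior (K : ℕ) (w : EllTwo) : Prop :=
  ∀ j k, ¬ (1 ≤ j ∧ 1 ≤ k ∧ k < K) → w (j, k) = 0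

lemma lift_interior {K : ℕ} {W : ℕ → ℕ → ℂ} (hW : memH K W) : Interior K (lift hW) :=
  fun j k h => by rw [lift_apply, if_neg h]

lemma secDiffX_apply {K : ℕ} {hx : ℝ} (hhx : 0 < hx) {w : EllTwo} (hw : Interior K w)
    (j k : ℕ) :
    secDiff (stepX K) w (j, k) = (hx : ℂ) ^ 2 * ddx K hx (fun j k => w (j, k)) j k := by
  have hne : (hx : ℂ) ≠ 0 := by exact_mod_cast hhx.ne'
  have e : secDiff (stepX K) w (j, k)
      = pshift (stepX K) w (j, k) + pshift (stepX K).symm w (j, k) - 2 * w (j, k) := rfl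
  rw [e, stepX_apply, stepX_symm_apply, ddx]
  by_cases h : 1 ≤ j ∧ 1 ≤ k ∧ k < K
  · rw [if_pos h, if_neg (by omega : ¬ (j = 0 ∨ k = 0 ∨ K ≤ k)), mul_div_cancel₀ _ (pow_ne_zero 2 hne)]
    by_cases h2 : 2 ≤ j
    · rw [if_pos ⟨h2, h.2⟩]
      ring
    · rw [if_neg (by omega), hw (j - 1) k (by omega)]
      ring
  · rw [if_neg h, if_neg (by omega), if_pos (by omega), hw j k h]
    ring

lemma secDiffY_apply {K : ℕ} {hy : ℝ} (hhy : 0 < hy) {w : EllTwo} (hw : Interior K w)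
    (j k : ℕ) :
    secDiff (stepY K) w (j, k) = (hy : ℂ) ^ 2 * ddy K hy (fun j k => w (j, k)) j k := by
  have hne : (hy : ℂ) ≠ 0 := by exact_mod_cast hhy.ne'
  have e : secDiff (stepY K) w (j, k)
      = pshift (stepY K) w (j, k) + pshift (stepY K).symm w (j, k) - 2 * w (j, k) := rfl
  rw [e, stepY_apply, stepY_symm_apply, ddy]
  by_cases h : 1 ≤ j ∧ 1 ≤ k ∧ k < K
  · rw [if_neg (by omega : ¬ (j = 0 ∨ k = 0 ∨ K ≤ k)), mul_div_cancel₀ _ (pow_ne_zero 2 hne)]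
    have h1 : (if 1 ≤ j ∧ 1 ≤ k ∧ k + 1 < K then w (j, k + 1) else 0) = w (j, k + 1) := by
      split_ifs with h'
      · rfl
      · exact (hw _ _ (by omega)).symm
    have h2 : (if 1 ≤ j ∧ 2 ≤ k ∧ k < K then w (j, k - 1) else 0) = w (j, k - 1) := by
      split_ifs with h'
      · rfl
      · exact (hw _ _ (by omega)).symm
    rw [h1, h2]
    ring
  · rw [if_neg (by omega), if_neg (by omega), if_pos (by omega), hw j k h]
    ring

lemma ddx_off {K : ℕ} (hx : ℝ) (W : ℕ → ℕ → ℂ) {j k : ℕ} (h : ¬ (1 ≤ j ∧ 1 ≤ k ∧ k < K)) :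
    ddx K hx W j k = 0 := by
  rw [ddx, if_pos (by omega)]

lemma ddy_off {K : ℕ} (hy : ℝ) (W : ℕ → ℕ → ℂ) {j k : ℕ} (h : ¬ (1 ≤ j ∧ 1 ≤ k ∧ k < K)) :
    ddy K hy W j k = 0 := by
  rw [ddy, if_pos (by omega)]

lemma opS_lift {K : ℕ} {hx hy : ℝ} (hhx : 0 < hx) (hhy : 0 < hy) {W : ℕ → ℕ → ℂ}
    (hW : memH K W) (j k : ℕ) :
    opS K (lift hW) (j, k) = if 1 ≤ j ∧ 1 ≤ k ∧ k < K then sN K hx hy W j k else 0 := by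
  have e : opS K (lift hW) (j, k) = lift hW (j, k)
      + ((1 / 12 : ℝ) : ℂ) * secDiff (stepX K) (lift hW) (j, k)
      + ((1 / 12 : ℝ) : ℂ) * secDiff (stepY K) (lift hW) (j, k) := rfl
  rw [e, secDiffX_apply hhx (lift_interior hW), secDiffY_apply hhy (lift_interior hW),
    ddx_congr hx (lift_agree hW), ddy_congr hy (lift_agree hW)]
  split_ifs with h
  · rw [lift_agree hW j k (by omega), sN]
    push_cast
    ring
  · rw [lift_interior hW j k h, ddx_off hx W h, ddy_off hy W h]
    ring

lemma opD_lift {K : ℕ} {hx hy : ℝ} (hhx : 0 < hx) (hhy : 0 < hy) {W : ℕ → ℕ → ℂ}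
    (hW : memH K W) (j k : ℕ) :
    opD K hx hy (lift hW) (j, k)
      = if 1 ≤ j ∧ 1 ≤ k ∧ k < K then deltaHN K hx hy W j k else 0 := by
  have hxne : (hx : ℂ) ≠ 0 := by exact_mod_cast hhx.ne'
  have hyne : (hy : ℂ) ≠ 0 := by exact_mod_cast hhy.ne'
  set A := (((hx ^ 2)⁻¹ : ℝ) : ℂ) • secDiff (stepX K) (lift hW) with hA
  set B := (((hy ^ 2)⁻¹ : ℝ) : ℂ) • secDiff (stepY K) (lift hW) with hB
  have hA' : ∀ j k, A (j, k) = ddx K hx W j k := by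
    intro j k
    have : A (j, k) = (((hx ^ 2)⁻¹ : ℝ) : ℂ) * secDiff (stepX K) (lift hW) (j, k) := rfl
    rw [this, secDiffX_apply hhx (lift_interior hW), ddx_congr hx (lift_agree hW)]
    push_cast
    field_simp
  have hB' : ∀ j k, B (j, k) = ddy K hy W j k := by
    intro j k
    have : B (j, k) = (((hy ^ 2)⁻¹ : ℝ) : ℂ) * secDiff (stepY K) (lift hW) (j, k) := rfl
    rw [this, secDiffY_apply hhy (lift_interior hW), ddy_congr hy (lift_agree hW)]
    push_cast
    field_simp
  have hAi : Interior K A := fun j k h => by rw [hA', ddx_off hx W h]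
  have hBi : Interior K B := fun j k h => by rw [hB', ddy_off hy W h]
  have e : opD K hx hy (lift hW) (j, k)
      = (A (j, k) + ((1 / 12 : ℝ) : ℂ) * secDiff (stepY K) A (j, k))
      + (B (j, k) + ((1 / 12 : ℝ) : ℂ) * secDiff (stepX K) B (j, k)) := rfl
  rw [e, secDiffX_apply hhx hBi, secDiffY_apply hhy hAi]
  simp only [hA', hB']
  have eA : ddx K hx W = fun j k => ddx K hx W j k := rfl
  split_ifs with h
  · rw [deltaHN, sNx, sNy]
    push_cast
    ring
  · rw [ddx_off hx _ h, ddy_off hy _ h, ddx_off hx _ h, ddy_off hy _ h]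
    ring

/-! ### Mass conservation -/

lemma memH_of_bound {K : ℕ} {W Z U : ℕ → ℕ → ℂ} (hW : memH K W) (hZ : memH K Z) (C : ℝ)
    (hU : ∀ j k, ‖U j k‖ ≤ C * (‖W j k‖ + ‖Z j k‖)) : memH K U := by
  obtain ⟨a1, a2, a3, a4⟩ := hW
  obtain ⟨b1, b2, b3, b4⟩ := hZ
  have key : ∀ j k, W j k = 0 → Z j k = 0 → U j k = 0 := by
    intro j k h1 h2
    have := hU j k
    rw [h1, h2] at this
    simpa using this
  refine ⟨fun k => key _ _ (a1 k) (b1 k), fun j => key _ _ (a2 j) (b2 j),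
    fun j => key _ _ (a3 j) (b3 j), ?_⟩
  refine Summable.of_nonneg_of_le (fun j => by positivity) (fun j => ?_)
    ((a4.add b4).mul_left (2 * C ^ 2))
  rw [← Finset.sum_add_distrib, Finset.mul_sum]
  refine Finset.sum_le_sum fun k _ => ?_
  calc ‖U j k‖ ^ 2 ≤ (C * (‖W j k‖ + ‖Z j k‖)) ^ 2 := by
        gcongr
        exact hU j k
    _ ≤ 2 * C ^ 2 * (‖W j k‖ ^ 2 + ‖Z j k‖ ^ 2) := by
        nlinarith [mul_nonneg (sq_nonneg C) (sq_nonneg (‖W j k‖ - ‖Z j k‖))]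

/-- The potential steps of the splitting preserve the modulus at each node: solving for `x`
multiplies `y` by `-z / conj z` with `z = i a + r / 2`. -/
lemma pointwise_norm {a r : ℝ} (ha : a ≠ 0) {x y : ℂ}
    (h : Complex.I * (a : ℂ) * (x - y) = (r : ℂ) * ((x + y) / 2)) : ‖x‖ = ‖y‖ := by
  have h1 : (Complex.I * a - r / 2) * x = (Complex.I * a + r / 2) * y := by
    linear_combination h
  have hn : ‖(Complex.I * a - r / 2 : ℂ)‖ = ‖(Complex.I * a + r / 2 : ℂ)‖ := by
    rw [← Complex.norm_conj, ← norm_neg]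
    congr 1
    simp [show (starRingEnd ℂ) 2 = 2 from Complex.conj_ofNat 2]
    ring
  have hpos : ‖(Complex.I * a + r / 2 : ℂ)‖ ≠ 0 := by
    rw [norm_ne_zero_iff]
    intro h0
    apply ha
    simpa using congrArg Complex.im h0
  have h2 := congrArg norm h1
  rw [norm_mul, norm_mul, hn] at h2
  exact mul_left_cancel₀ hpos h2

/-- The kinetic step of the splitting preserves the norm. -/
lemma kinetic_step {K : ℕ} {hx hy : ℝ} (hhx : 0 < hx) (hhy : 0 < hy) {α ch : ℝ} (hα : α ≠ 0)
    (Vt : ℕ → ℝ) (hVt : ∃ C : ℝ, ∀ j, |Vt j| ≤ C) {T B : ℕ → ℕ → ℂ}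
    (hT : memH K T) (hB : memH K B)
    (h : ∀ j k, 1 ≤ j → 1 ≤ k → k ≤ K - 1 →
      Complex.I * (α : ℂ) * sN K hx hy (fun j' k' => T j' k' - B j' k') j k
      = -(ch : ℂ) * deltaHN K hx hy (fun j' k' => (T j' k' + B j' k') / 2) j k
        + sN K hx hy (fun j' k' => (Vt j' : ℂ) * ((T j' k' + B j' k') / 2)) j k) :
    nrmH K hx hy T = nrmH K hx hy B := by
  obtain ⟨C, hC⟩ := hVt
  have hw0 : ∀ j k, ‖(T j k + B j k) / 2‖ ≤ 1 * (‖T j k‖ + ‖B j k‖) := by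
    intro j k
    rw [norm_div]
    have := norm_add_le (T j k) (B j k)
    have := norm_nonneg (T j k + B j k)
    norm_num
    linarith
  have hu : memH K (fun j k => T j k - B j k) :=
    memH_of_bound hT hB 1 fun j k => by
      rw [one_mul]
      exact norm_sub_le _ _
  have hw : memH K (fun j k => (T j k + B j k) / 2) := memH_of_bound hT hB 1 hw0
  have hv : memH K (fun j k => (Vt j : ℂ) * ((T j k + B j k) / 2)) :=
    memH_of_bound hT hB C fun j k => by
      rw [norm_mul, Complex.norm_real, Real.norm_eq_abs]
      have h0 := hw0 j k
      rw [one_mul] at h0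
      exact mul_le_mul (hC j) h0 (norm_nonneg _) ((abs_nonneg _).trans (hC j))
  have heq : (Complex.I * (α : ℂ)) • opS K (lift hu)
      = -(ch : ℂ) • opD K hx hy (lift hw) + opS K (lift hv) := by
    ext ⟨j, k⟩
    have e : (Complex.I * (α : ℂ)) * opS K (lift hu) (j, k)
      = -(ch : ℂ) * opD K hx hy (lift hw) (j, k) + opS K (lift hv) (j, k) := by
      rw [opS_lift hhx hhy, opS_lift hhx hhy, opD_lift hhx hhy]
      split_ifs with hi
      · exact h j k hi.1 hi.2.1 (by omega)
      · simp
    exact e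
  have him : (inner ℂ (lift hw) (lift hv)).im = 0 := by
    rw [lp.inner_eq_tsum]
    have e : ∀ p, inner ℂ (lift hw p) (lift hv p)
        = ((Vt p.1 * ‖lift hw p‖ ^ 2 : ℝ) : ℂ) := by
      rintro ⟨j, k⟩
      have e1 : lift hv (j, k) = (Vt j : ℂ) * lift hw (j, k) := by
        rw [lift_apply, lift_apply]
        split_ifs <;> simp
      rw [e1, RCLike.inner_apply, mul_assoc, Complex.mul_conj, Complex.normSq_eq_norm_sq]
      push_cast
      rfl
    rw [tsum_congr e, ← Complex.ofReal_tsum, Complex.ofReal_im]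
  have hre := energy_identity (opS_selfAdjoint K) (opD_selfAdjoint K hx hy)
    (opS_opD_commute K hx hy) (opS_isUnit K) hα him heq
  have eu : lift hu = lift hT - lift hB := by
    ext ⟨j, k⟩
    change lift hu (j, k) = lift hT (j, k) - lift hB (j, k)
    simp only [lift_apply]
    split_ifs <;> simp
  have ew : lift hw = (1 / 2 : ℂ) • (lift hT + lift hB) := by
    ext ⟨j, k⟩
    change lift hw (j, k) = (1 / 2 : ℂ) * (lift hT (j, k) + lift hB (j, k))
    simp only [lift_apply]
    split_ifs
    · ring
    · simp
  rw [eu, ew, inner_smul_left, inner_add_left, inner_sub_right, inner_sub_right] at hre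
  have hTB : (inner ℂ (lift hT) (lift hB)).re = (inner ℂ (lift hB) (lift hT)).re := by
    rw [← inner_conj_symm, Complex.conj_re]
  have hn : ‖lift hT‖ ^ 2 = ‖lift hB‖ ^ 2 := by
    rw [inner_self_eq_norm_sq_to_K, inner_self_eq_norm_sq_to_K] at hre
    have h3 : (starRingEnd ℂ) (1 / 2) = ((1 / 2 : ℝ) : ℂ) := by
      rw [← Complex.conj_ofReal]
      norm_num
    rw [h3, Complex.re_ofReal_mul] at hre
    simp only [Complex.add_re, Complex.sub_re, hTB, Complex.coe_algebraMap,
      ← Complex.ofReal_pow, Complex.ofReal_re] at hre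
    linarith
  rw [nrmH, nrmH, innH_self hT, innH_self hB, hn]

/-- if the sources vanish, any solution of the splitting scheme with all
members in `H_h` conserves mass: `‖Ψ^m‖_{H_h} = ‖Ψ⁰_h‖_{H_h}` for every `m ≥ 1`. -/
theorem stmt6 (K : ℕ) (hK : 2 ≤ K) (hx hy hbar ch : ℝ)
    (hhx : 0 < hx) (hhy : 0 < hy) (hhbar : 0 < hbar) (hch : 0 < ch)
    (V : ℕ → ℕ → ℝ) (hV : ∃ C : ℝ, ∀ j k, |V j k| ≤ C)
    (Vt : ℕ → ℝ) (hVt : ∃ C : ℝ, ∀ j, |Vt j| ≤ C)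
    (tau : ℕ → ℝ) (htau : ∀ m, 1 ≤ m → 0 < tau m)
    (PsiB PsiT Psi : ℕ → ℕ → ℕ → ℂ)
    (hsol : SplitSol K hx hy hbar ch V Vt tau (fun _ _ _ => 0) PsiB PsiT Psi) :
    ∀ m, 1 ≤ m → nrmH K hx hy (Psi m) = nrmH K hx hy (Psi 0) := by
  obtain ⟨mB, mT, mP, h1, h2, h3⟩ := hsol
  have step : ∀ m, 1 ≤ m → nrmH K hx hy (Psi m) = nrmH K hx hy (Psi (m - 1)) := by
    intro m hm
    have ht := htau m hm
    have htc : (tau m : ℂ) ≠ 0 := by exact_mod_cast ht.ne'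
    have ha : hbar / (tau m / 2) ≠ 0 := by positivity
    have hα : hbar / tau m ≠ 0 := by positivity
    have s1 : nrmH K hx hy (PsiB m) = nrmH K hx hy (Psi (m - 1)) :=
      nrmH_congr hx hy fun j k hj hk hk' => by
        refine pointwise_norm (a := hbar / (tau m / 2)) (r := V j k - Vt j) ha ?_
        rw [← h1 m hm j k hj hk hk']
        push_cast
        ring
    have s3 : nrmH K hx hy (Psi m) = nrmH K hx hy (PsiT m) :=
      nrmH_congr hx hy fun j k hj hk hk' => by
        refine pointwise_norm (a := hbar / (tau m / 2)) (r := V j k - Vt j) ha ?_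
        rw [← h3 m hm j k hj hk hk']
        push_cast
        ring
    have s2 : nrmH K hx hy (PsiT m) = nrmH K hx hy (PsiB m) := by
      refine kinetic_step hhx hhy (α := hbar / tau m) (ch := ch) hα Vt hVt (mT m hm) (mB m hm) ?_
      intro j k hj hk hk'
      have h := h2 m hm j k hj hk hk'
      rw [add_zero] at h
      rw [← h]
      push_cast
      ring
    rw [s3, s2, s1]
  intro m hm
  induction m, hm using Nat.le_induction with
  | base => exact step 1 le_rfl
  | succ n hn ih =>
    rw [step (n + 1) (by omega), Nat.add_sub_cancel]
    exact ih
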